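/- arXiv:2509.26297 — 3 statements merged into one kernel-verified Lean document; each statement's English description precedes it below -/
import Mathlib

section
/- The function G is holomorphic on the open set ℂ ∖ ([1,∞) ∪ {0}); together with its agreement with Σ_{n≥1} √n z^n on the punctured unit disc, it therefore provides the analytic continuation of the fractional polylogarithm Σ_{n≥1} √n z^n to ℂ ∖ ([1,∞) ∪ {0}). -/
/-- 't Hooft's analytically continued fractional polylogarithm
`G(z) = (√π/2) · Σ_{n∈ℤ} (2πin − Log z)^{−3/2}`. -/
noncomputable def G (z : ℂ) : ℂ :=
  (Real.sqrt Real.pi / 2) *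
    ∑' n : ℤ, (2 * (Real.pi : ℂ) * Complex.I * (n : ℂ) - Complex.log z) ^ (-(3 : ℂ) / 2)

/-!
Let `H(w) = Σ_{n∈ℤ} (2πin − w)^{−s}` with `Re s > 1`. The series converges locally uniformly, and
its terms are holomorphic wherever `exp w ∉ [1,∞)`, because `2πin − w ∈ (−∞,0]` forces
`exp w ≥ 1`. As `H` has period `2πi`, it descends along `exp` to a holomorphic function of
`z = exp w`, and the jump of the principal logarithm across the negative axis is harmless.

For `Re w < 0`, Poisson summation for `t ↦ t^{s−1} e^{wt}` on `t > 0` gives Lipschitz's formula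
`Σ_{n≥1} n^{s−1} e^{nw} = Γ(s) H(w)`, and `w = Log z` turns the left side into the power series.
The Fourier transform needed here is the Gamma integral, continued from real to complex rates.
-/

open Complex Filter Topology MeasureTheory Set Asymptotics FourierTransform
open scoped Real

/-! ### The periodized power -/

/-- The periodization `Σ_{n∈ℤ} (2πin − w)^{−s}` of the complex power, with principal values. For
`1 < Re s` the series converges for every `w`. -/
noncomputable def periodizedCPow (s w : ℂ) : ℂ :=
  ∑' n : ℤ, (2 * π * I * n - w) ^ (-s)

lemma periodizedCPow_add_two_pi_mul_I (s w : ℂ) :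
    periodizedCPow s (w + 2 * π * I) = periodizedCPow s w := by
  rw [periodizedCPow, ← (Equiv.addRight (1 : ℤ)).tsum_eq]
  refine tsum_congr fun n => congrArg (· ^ (-s)) ?_
  simp only [Equiv.coe_addRight, Int.cast_add, Int.cast_one]
  ring

lemma norm_cpow_neg_le {s v : ℂ} {r : ℝ} (hs : 0 ≤ s.re) (hr : 0 < r) (hv : r ≤ ‖v‖) :
    ‖v ^ (-s)‖ ≤ r ^ (-s.re) * Real.exp (π * |s.im|) := by
  have harg : arg v * s.im ≤ π * |s.im| := by
    calc arg v * s.im ≤ |arg v| * |s.im| := (le_abs_self _).trans (abs_mul _ _).le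
      _ ≤ π * |s.im| := by gcongr; exact abs_arg_le_pi v
  calc ‖v ^ (-s)‖ ≤ ‖v‖ ^ (-s).re / Real.exp (arg v * (-s).im) := norm_cpow_le v (-s)
    _ = ‖v‖ ^ (-s.re) * Real.exp (arg v * s.im) := by
      rw [neg_re, neg_im, mul_neg, Real.exp_neg, div_inv_eq_mul]
    _ ≤ r ^ (-s.re) * Real.exp (π * |s.im|) := by
      gcongr ?_ * Real.exp ?_
      exact Real.rpow_le_rpow_of_nonpos hr hv (neg_nonpos.2 hs)

lemma abs_le_norm_two_pi_mul_I_mul_sub {w : ℂ} {x : ℝ} (hw : ‖w‖ ≤ |x|) :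
    |x| ≤ ‖2 * π * I * x - w‖ := by
  have hnorm : ‖2 * π * I * x‖ = 2 * π * |x| := by simp [abs_of_pos Real.pi_pos]
  have htri := norm_sub_norm_le (2 * π * I * x) w
  rw [hnorm] at htri
  nlinarith [Real.pi_gt_three, abs_nonneg x]

lemma summableLocallyUniformlyOn_periodizedCPow {s : ℂ} (hs : 1 < s.re) :
    SummableLocallyUniformlyOn (fun (n : ℤ) (w : ℂ) => (2 * π * I * n - w) ^ (-s)) univ := by
  refine .of_locally_bounded_eventually isOpen_univ fun K _ hK => ?_
  obtain ⟨R, hR⟩ := hK.isBounded.exists_norm_le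
  refine ⟨fun n => |(n : ℝ)| ^ (-s.re) * Real.exp (π * |s.im|),
    (Real.summable_abs_int_rpow hs).mul_right _, ?_⟩
  have hlarge : ∀ᶠ n : ℤ in cofinite, max R 0 < |(n : ℝ)| :=
    (tendsto_norm_cocompact_atTop.comp Int.tendsto_coe_cofinite).eventually_gt_atTop _
  filter_upwards [hlarge] with n hn w hw
  obtain ⟨hRn, hn0⟩ := max_lt_iff.1 hn
  refine norm_cpow_neg_le (by linarith) hn0 ?_
  simpa using abs_le_norm_two_pi_mul_I_mul_sub ((hR w hw).trans hRn.le)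

lemma two_pi_mul_I_mul_sub_mem_slitPlane {w : ℂ} (hw : cexp w ∉ ofReal '' Ici 1) (n : ℤ) :
    2 * π * I * n - w ∈ slitPlane := by
  contrapose! hw
  rw [mem_slitPlane_iff, not_or, not_lt, not_not] at hw
  obtain ⟨hre, him⟩ := hw
  have hw_re : 0 ≤ w.re := by simpa using hre
  have hw_im : 2 * π * n - w.im = 0 := by simpa using him
  have hw_eq : w = w.re + n * (2 * π * I) := by
    apply Complex.ext
    · simp
    · rw [← sub_eq_zero.1 hw_im]
      simp [mul_comm]
  refine ⟨Real.exp w.re, Real.one_le_exp hw_re, ?_⟩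
  rw [ofReal_exp]
  exact (exp_eq_exp_iff_exists_int.2 ⟨n, hw_eq⟩).symm

lemma isOpen_setOf_exp_notMem_ofReal_image_Ici (a : ℝ) : IsOpen {w | cexp w ∉ ofReal '' Ici a} :=
  (isometry_ofReal.isClosedEmbedding.isClosedMap _ isClosed_Ici).isOpen_compl.preimage
    continuous_exp

lemma differentiableOn_periodizedCPow {s : ℂ} (hs : 1 < s.re) :
    DifferentiableOn ℂ (periodizedCPow s) {w | cexp w ∉ ofReal '' Ici 1} := by
  refine ((summableLocallyUniformlyOn_periodizedCPow hs).mono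
    (subset_univ _)).differentiableOn (isOpen_setOf_exp_notMem_ofReal_image_Ici 1) fun n w hw => ?_
  exact DifferentiableAt.cpow_const (by fun_prop) (two_pi_mul_I_mul_sub_mem_slitPlane hw n)

lemma differentiableAt_comp_log_of_periodic {f : ℂ → ℂ} (hf : f.Periodic (2 * π * I)) {z : ℂ}
    (hz : z ≠ 0) (hd : DifferentiableAt ℂ f (log z)) :
    DifferentiableAt ℂ (fun z => f (log z)) z := by
  -- A branch of the logarithm that is holomorphic at `z` and agrees there with the principal one.
  set L : ℂ → ℂ := fun v => log (v / z) + log z with hL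
  have hLz : L z = log z := by simp [hL, hz]
  have hL_diff : DifferentiableAt ℂ L z :=
    ((differentiableAt_id.div_const z).clog (by simp [hz])).add_const _
  have hfL : DifferentiableAt ℂ (fun v => f (L v)) z :=
    DifferentiableAt.comp z (hLz.symm ▸ hd) hL_diff
  refine hfL.congr_of_eventuallyEq ?_
  filter_upwards [isOpen_ne.mem_nhds hz] with v hv
  have hexp : cexp (log v) = cexp (L v) := by
    rw [hL, Complex.exp_add, exp_log hv, exp_log (div_ne_zero hv hz), exp_log hz,
      div_mul_cancel₀ v hz]
  obtain ⟨n, hn⟩ := exp_eq_exp_iff_exists_int.1 hexp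
  rw [hn]
  exact hf.int_mul n (L v)

/-! ### The Gamma integral at complex rates -/

lemma differentiableOn_laplace {f : ℝ → ℂ} {a : ℝ}
    (hf : ∀ c : ℝ, a < c → IntegrableOn (fun t : ℝ => f t * cexp (-(c * t))) (Ioi 0)) :
    DifferentiableOn ℂ (fun w : ℂ => ∫ t in Ioi (0 : ℝ), f t * cexp (-(w * t)))
      {w | a < w.re} := by
  intro w (hw : a < w.re)
  set δ := (w.re - a) / 3 with hδ
  have hδ_pos : 0 < δ := by linarith
  have hre {x : ℂ} (hx : x ∈ Metric.ball w δ) : a + 2 * δ < x.re := by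
    have h := (abs_re_le_norm (x - w)).trans_lt (mem_ball_iff_norm.1 hx)
    rw [sub_re, abs_lt] at h
    linarith
  have hnorm (x : ℂ) (t : ℝ) : ‖f t * cexp (-(x * t))‖ = ‖f t‖ * Real.exp (-(x.re * t)) := by
    simp [norm_exp]
  have hmeas (x : ℂ) : AEStronglyMeasurable (fun t : ℝ => f t * cexp (-(x * t)))
      (volume.restrict (Ioi 0)) := by
    have h := (hf (a + 1) (by linarith)).aestronglyMeasurable.mul
      (g := fun t : ℝ => cexp ((a + 1 : ℝ) * t - x * t)) (by fun_prop)
    refine h.congr (.of_forall fun t => ?_)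
    simp only [Pi.mul_apply, mul_assoc, ← Complex.exp_add]
    ring_nf
  have hint : IntegrableOn (fun t : ℝ => f t * cexp (-(w * t))) (Ioi 0) := by
    refine Integrable.mono (hf w.re hw) (hmeas w) (.of_forall fun t => ?_)
    rw [hnorm, hnorm, ofReal_re]
  refine (hasDerivAt_integral_of_dominated_loc_of_deriv_le
    (F' := fun (x : ℂ) (t : ℝ) => f t * cexp (-(x * t)) * -(t : ℂ))
    (bound := fun t : ℝ => ‖f t * cexp (-((a + δ : ℝ) * t))‖ * δ⁻¹)
    (Metric.ball_mem_nhds w hδ_pos) (.of_forall hmeas) hint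
    ((hmeas w).mul (by fun_prop)) ?_
    ((hf (a + δ) (by linarith)).norm.mul_const _) ?_).2.differentiableAt.differentiableWithinAt
  · filter_upwards [ae_restrict_mem measurableSet_Ioi] with t (ht : 0 < t) x hx
    have hlin : t ≤ Real.exp (δ * t) * δ⁻¹ := by
      rw [← div_eq_mul_inv, le_div_iff₀ hδ_pos]
      linarith [Real.add_one_le_exp (δ * t)]
    calc ‖f t * cexp (-(x * t)) * -(t : ℂ)‖ = ‖f t‖ * Real.exp (-(x.re * t)) * t := by
          rw [norm_mul, hnorm, norm_neg, norm_real, Real.norm_of_nonneg ht.le]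
      _ ≤ ‖f t‖ * Real.exp (-((a + 2 * δ) * t)) * (Real.exp (δ * t) * δ⁻¹) := by
          gcongr
          exact (hre hx).le
      _ = ‖f t * cexp (-((a + δ : ℝ) * t))‖ * δ⁻¹ := by
          rw [hnorm, ofReal_re, ← mul_assoc, mul_assoc ‖f t‖, ← Real.exp_add]
          ring_nf
  · refine .of_forall fun t x _ => ?_
    simpa only [mul_assoc] using
      ((hasDerivAt_mul_const (x := x) (t : ℂ)).fun_neg.cexp).const_mul (f t)

lemma integrableOn_cpow_mul_exp_neg {s : ℂ} (hs : 0 < s.re) {c : ℝ} (hc : 0 < c) :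
    IntegrableOn (fun t : ℝ => (t : ℂ) ^ (s - 1) * cexp (-(c * t))) (Ioi 0) := by
  have hreal : IntegrableOn (fun t : ℝ => t ^ (s.re - 1) * Real.exp (-c * t)) (Ioi 0) := by
    simpa using integrableOn_rpow_mul_exp_neg_mul_rpow (s := s.re - 1) (by linarith) one_pos hc
  refine hreal.mono' (.mul ?_ (by fun_prop)) ?_
  · exact ((continuousOn_of_forall_continuousAt fun t ht =>
      continuousAt_ofReal_cpow_const t _ (.inr ht.ne')).aestronglyMeasurable measurableSet_Ioi)
  · filter_upwards [ae_restrict_mem measurableSet_Ioi] with t (ht : 0 < t)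
    simp [norm_exp, norm_cpow_eq_rpow_re_of_pos ht]

lemma integral_cpow_mul_exp_neg_mul_Ioi_of_re_pos {s w : ℂ} (hs : 0 < s.re) (hw : 0 < w.re) :
    ∫ t in Ioi (0 : ℝ), (t : ℂ) ^ (s - 1) * cexp (-(w * t)) = Gamma s * w ^ (-s) := by
  have hopen : IsOpen {w : ℂ | 0 < w.re} := isOpen_lt continuous_const continuous_re
  have hleft := (differentiableOn_laplace fun c hc =>
    integrableOn_cpow_mul_exp_neg hs hc).analyticOnNhd hopen
  have hright : AnalyticOnNhd ℂ (fun w : ℂ => Gamma s * w ^ (-s)) {w | 0 < w.re} :=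
    DifferentiableOn.analyticOnNhd (fun w hw => ((differentiableAt_id.cpow_const
      (Or.inl hw)).const_mul _).differentiableWithinAt) hopen
  have hreal {r : ℝ} (hr : 0 < r) :
      ∫ t in Ioi (0 : ℝ), (t : ℂ) ^ (s - 1) * cexp (-(r * t)) = Gamma s * (r : ℂ) ^ (-s) := by
    rw [integral_cpow_mul_exp_neg_mul_Ioi hs hr, mul_comm, one_div, inv_cpow, cpow_neg]
    rw [arg_ofReal_of_nonneg hr.le]
    exact Real.pi_pos.ne
  have hfreq : ∃ᶠ w in 𝓝[≠] (1 : ℂ),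
      ∫ t in Ioi (0 : ℝ), (t : ℂ) ^ (s - 1) * cexp (-(w * t)) = Gamma s * w ^ (-s) := by
    have hofReal : Tendsto ofReal (𝓝[≠] 1) (𝓝[≠] 1) :=
      (continuous_ofReal.tendsto' 1 1 ofReal_one).inf
        (tendsto_principal_principal.2 fun r hr => by simpa using hr)
    refine hofReal.frequently (Eventually.frequently ?_)
    filter_upwards [nhdsWithin_le_nhds (lt_mem_nhds one_pos)] with r hr using hreal hr
  exact hleft.eqOn_of_preconnected_of_frequently_eq hright
    (convex_halfSpace_re_gt 0).isPreconnected (by simp) hfreq hw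

/-! ### Lipschitz's formula -/

/-- The function `t ↦ t^{s−1} e^{wt}` on `t > 0`, extended by zero; Poisson summation is applied to
it. -/
noncomputable def gammaKernel (s w : ℂ) : ℝ → ℂ :=
  (Ioi 0).indicator fun t => (t : ℂ) ^ (s - 1) * cexp (w * t)

lemma gammaKernel_of_pos (s w : ℂ) {t : ℝ} (ht : 0 < t) :
    gammaKernel s w t = (t : ℂ) ^ (s - 1) * cexp (w * t) :=
  indicator_of_mem ht _

lemma gammaKernel_of_nonpos (s w : ℂ) {t : ℝ} (ht : t ≤ 0) : gammaKernel s w t = 0 :=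
  indicator_of_notMem (notMem_Ioi.2 ht) _

lemma continuous_gammaKernel {s : ℂ} (hs : 1 < s.re) (w : ℂ) : Continuous (gammaKernel s w) := by
  have hcpow : Continuous fun t : ℝ => (t : ℂ) ^ (s - 1) :=
    continuous_ofReal_cpow_const (by simpa using hs)
  have hne : s - 1 ≠ 0 := sub_ne_zero.2 fun h => by simp [h] at hs
  have heq : gammaKernel s w = fun t : ℝ => ((max t 0 : ℝ) : ℂ) ^ (s - 1) * cexp (w * t) := by
    ext t
    rcases le_or_gt t 0 with ht | ht
    · simp [gammaKernel_of_nonpos s w ht, max_eq_right ht, hne]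
    · rw [gammaKernel_of_pos s w ht, max_eq_left ht.le]
  rw [heq]
  exact (hcpow.comp (continuous_id.max continuous_const)).mul (by fun_prop)

lemma gammaKernel_isBigO_cocompact (s : ℂ) {w : ℂ} (hw : w.re < 0) (b : ℝ) :
    gammaKernel s w =O[cocompact ℝ] fun t => |t| ^ b := by
  rw [cocompact_eq_atBot_atTop, isBigO_sup]
  constructor
  · refine (isBigO_zero (E' := ℂ) (fun t : ℝ => |t| ^ b) atBot).congr' ?_ .rfl
    filter_upwards [eventually_le_atBot 0] with t ht
    exact (gammaKernel_of_nonpos s w ht).symm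
  · have h := (isBigO_refl (fun t : ℝ => t ^ (s.re - 1)) atTop).mul
      (isLittleO_exp_neg_mul_rpow_atTop (neg_pos.2 hw) (b - (s.re - 1))).isBigO
    refine IsBigO.of_norm_left (h.congr' ?_ ?_)
    · filter_upwards [eventually_gt_atTop 0] with t ht
      simp [gammaKernel_of_pos s w ht, norm_exp, norm_cpow_eq_rpow_re_of_pos ht]
    · filter_upwards [eventually_gt_atTop 0] with t ht
      rw [← Real.rpow_add ht, abs_of_pos ht, add_sub_cancel]

lemma fourier_gammaKernel {s w : ℂ} (hs : 0 < s.re) (hw : w.re < 0) (x : ℝ) :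
    𝓕 (gammaKernel s w) x = Gamma s * (2 * π * I * x - w) ^ (-s) := by
  rw [← integral_cpow_mul_exp_neg_mul_Ioi_of_re_pos hs (by simpa using hw),
    Real.fourier_real_eq_integral_exp_smul, ← integral_indicator measurableSet_Ioi]
  refine integral_congr_ae (.of_forall fun t => ?_)
  simp only [gammaKernel, smul_eq_mul, indicator_apply, mul_ite, mul_zero]
  congr 1
  rw [mul_left_comm, ← Complex.exp_add]
  push_cast
  ring_nf

lemma tsum_cpow_mul_exp_eq_Gamma_mul_periodizedCPow {s w : ℂ} (hs : 1 < s.re) (hw : w.re < 0) :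
    ∑' n : ℕ, (n : ℂ) ^ (s - 1) * cexp (w * n) = Gamma s * periodizedCPow s w := by
  have hs0 : 0 < s.re := one_pos.trans hs
  have hne : s - 1 ≠ 0 := sub_ne_zero.2 fun h => by simp [h] at hs
  have hnat (n : ℕ) : gammaKernel s w n = (n : ℂ) ^ (s - 1) * cexp (w * n) := by
    rcases n.eq_zero_or_pos with rfl | hn
    · simp [gammaKernel_of_nonpos, hne]
    · simpa using gammaKernel_of_pos s w (Nat.cast_pos.2 hn)
  have hsupp : Function.support (fun n : ℤ => gammaKernel s w n) ⊆ range ((↑) : ℕ → ℤ) := by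
    intro n hn
    by_contra hneg
    refine hn (gammaKernel_of_nonpos s w (Int.cast_nonpos.2 ?_))
    exact le_of_not_ge fun h => hneg ⟨n.toNat, Int.toNat_of_nonneg h⟩
  have hsum : Summable fun n : ℤ => 𝓕 (gammaKernel s w) n := by
    simp only [fourier_gammaKernel hs0 hw, ofReal_intCast]
    exact ((summableLocallyUniformlyOn_periodizedCPow hs).summable (mem_univ w)).mul_left _
  have hpoisson := Real.tsum_eq_tsum_fourier_of_rpow_decay_of_summable
    (continuous_gammaKernel hs w) one_lt_two (gammaKernel_isBigO_cocompact s hw _) hsum 0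
  calc ∑' n : ℕ, (n : ℂ) ^ (s - 1) * cexp (w * n)
      = ∑' n : ℕ, gammaKernel s w ((n : ℤ) : ℝ) := by simp [hnat]
    _ = ∑' n : ℤ, gammaKernel s w n := Nat.cast_injective.tsum_eq hsupp
    _ = ∑' n : ℤ, 𝓕 (gammaKernel s w) n := by simpa using hpoisson
    _ = Gamma s * periodizedCPow s w := by
      simp only [fourier_gammaKernel hs0 hw, ofReal_intCast, tsum_mul_left, periodizedCPow]

/-! ### Continuation of the polylogarithm -/

/-- The continuation `Γ(s) Σ_{n∈ℤ} (2πin − Log z)^{−s}` of the polylogarithm of order `1 − s`,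
that is, of `Σ_{n≥1} n^{s−1} zⁿ`. -/
noncomputable def polylogContinuation (s z : ℂ) : ℂ :=
  Gamma s * periodizedCPow s (log z)

lemma differentiableOn_polylogContinuation {s : ℂ} (hs : 1 < s.re) :
    DifferentiableOn ℂ (polylogContinuation s) {z | z ≠ 0 ∧ z ∉ ofReal '' Ici 1} := by
  rintro z ⟨hz0, hz⟩
  have hlog : cexp (log z) ∉ ofReal '' Ici 1 := by rwa [exp_log hz0]
  have hdiff : DifferentiableAt ℂ (periodizedCPow s) (log z) :=
    (differentiableOn_periodizedCPow hs).differentiableAt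
      ((isOpen_setOf_exp_notMem_ofReal_image_Ici 1).mem_nhds hlog)
  exact ((differentiableAt_comp_log_of_periodic (periodizedCPow_add_two_pi_mul_I s) hz0
    hdiff).const_mul _).differentiableWithinAt

lemma polylogContinuation_eq_tsum {s z : ℂ} (hs : 1 < s.re) (hz0 : z ≠ 0) (hz1 : ‖z‖ < 1) :
    polylogContinuation s z = ∑' n : ℕ, (n : ℂ) ^ (s - 1) * z ^ n := by
  have hlog : (log z).re < 0 := by
    rw [log_re]
    exact Real.log_neg (norm_pos_iff.2 hz0) hz1
  rw [polylogContinuation, ← tsum_cpow_mul_exp_eq_Gamma_mul_periodizedCPow hs hlog]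
  refine tsum_congr fun n => ?_
  rw [mul_comm (log z), exp_nat_mul, exp_log hz0]

lemma G_eq_polylogContinuation : G = polylogContinuation (3 / 2) := by
  have hGamma : Gamma (3 / 2) = √π / 2 := by
    rw [show (3 / 2 : ℂ) = 1 / 2 + 1 by norm_num, Gamma_add_one _ (by norm_num),
      Gamma_one_half_eq, Real.sqrt_eq_rpow, ofReal_cpow Real.pi_pos.le]
    push_cast
    ring
  ext z
  rw [G, polylogContinuation, periodizedCPow, hGamma, neg_div]

lemma natCast_cpow_three_halves_sub_one (n : ℕ) : (n : ℂ) ^ ((3 / 2 : ℂ) - 1) = √n := by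
  rw [Real.sqrt_eq_rpow, ofReal_cpow n.cast_nonneg]
  norm_num

theorem G_holomorphic_and_continues_general {s : ℂ} (hs : 1 < s.re) :
    DifferentiableOn ℂ (polylogContinuation s) {z | z ≠ 0 ∧ z ∉ ofReal '' Ici 1} ∧
    ∀ z : ℂ, 0 < ‖z‖ → ‖z‖ < 1 →
      polylogContinuation s z = ∑' n : ℕ, (n : ℂ) ^ (s - 1) * z ^ n :=
  ⟨differentiableOn_polylogContinuation hs,
    fun _ hz0 hz1 => polylogContinuation_eq_tsum hs (norm_pos_iff.1 hz0) hz1⟩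

/-- `G` is holomorphic on `ℂ ∖ ([1,∞) ∪ {0})` and agrees with `Σ_{n≥1} √n zⁿ`
on the punctured unit disc, so it analytically continues the fractional
polylogarithm to `ℂ ∖ ([1,∞) ∪ {0})`. -/
theorem G_holomorphic_and_continues :
    DifferentiableOn ℂ G {z : ℂ | z ≠ 0 ∧ z ∉ Complex.ofReal '' Set.Ici (1 : ℝ)} ∧
    ∀ z : ℂ, 0 < ‖z‖ → ‖z‖ < 1 → G z = ∑' n : ℕ, (Real.sqrt n : ℂ) * z ^ n := by
  simpa only [← G_eq_polylogContinuation, natCast_cpow_three_halves_sub_one] using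
    G_holomorphic_and_continues_general (s := 3 / 2) (by norm_num)
end

section
/- For every complex number z with 0 < |z| < 1 and |Log z| < 2π, one has G(z) = (√π/2)·(−Log z)^{−3/2} + Σ_{n≥0} ζ(−n − 1/2) · (Log z)^n / n!, where the series on the right converges and ζ is the Riemann zeta function. -/
open Complex Ring
open scoped Nat Real

theorem Gamma_mul_multichoose {s : ℂ} (hs : ∀ n : ℕ, s ≠ -n) (k : ℕ) :
    Gamma s * multichoose s k = Gamma (s + k) / k ! := by
  have hk : (k ! : ℂ) ≠ 0 := mod_cast k.factorial_ne_zero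
  have h := factorial_nsmul_multichoose_eq_ascPochhammer s k
  rw [Polynomial.ascPochhammer_smeval_eq_eval, ← Gamma_add_nat_div_Gamma_eq s hs, nsmul_eq_mul,
    eq_div_iff (Gamma_ne_zero hs)] at h
  rw [eq_div_iff hk, ← h]
  ring

theorem Gamma_three_halves : Gamma (3 / 2) = √π / 2 := by
  have h : Real.Gamma (3 / 2) = √π / 2 := by
    simpa [show (1 : ℝ) + 2⁻¹ = 3 / 2 by norm_num] using Real.Gamma_nat_add_half 1
  simpa [← Gamma_ofReal] using congrArg ((↑) : ℝ → ℂ) h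

theorem hasSum_multichoose_mul_pow (s : ℂ) {u : ℂ} (hu : ‖u‖ < 1) :
    HasSum (fun k : ℕ ↦ multichoose s k * u ^ k) ((1 - u) ^ (-s)) := by
  have h := (one_div_one_sub_cpow_hasFPowerSeriesOnBall_zero s).hasSum (y := u)
    (by simpa [enorm_eq_nnnorm] using! hu)
  simpa [FormalMultilinearSeries.ofScalars_apply_eq, multichoose_eq, cpow_neg, mul_comm] using h

theorem summable_norm_multichoose_mul_pow (s : ℂ) {r : ℝ} (hr₀ : 0 ≤ r) (hr₁ : r < 1) :
    Summable (fun k : ℕ ↦ ‖multichoose s k‖ * r ^ k) := by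
  simpa [abs_of_nonneg hr₀] using
    (hasSum_multichoose_mul_pow s (u := r) (by simpa [abs_of_nonneg hr₀])).summable.norm

theorem sub_cpow_eq_cpow_mul_one_sub_div_cpow {a w : ℂ} (ha : 0 ≤ a.re) (hw : ‖w‖ < ‖a‖) (s : ℂ) :
    (a - w) ^ s = a ^ s * (1 - w / a) ^ s := by
  have ha₀ : a ≠ 0 := norm_pos_iff.1 ((norm_nonneg w).trans_lt hw)
  have hre : 0 < (1 - w / a).re := by
    have : (w / a).re < 1 := (re_le_norm _).trans_lt <| by
      rwa [norm_div, div_lt_one (norm_pos_iff.2 ha₀)]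
    simpa using this
  have hv₀ : 1 - w / a ≠ 0 := fun h ↦ by simp [h] at hre
  have harg_a := abs_le.1 (abs_arg_le_pi_div_two_iff.2 ha)
  have harg_v := abs_lt.1 (abs_arg_lt_pi_div_two_iff.2 (Or.inl hre))
  have hlog : log (a * (1 - w / a)) = log a + log (1 - w / a) :=
    log_mul ha₀ hv₀ ⟨by linarith, by linarith⟩
  rw [show a - w = a * (1 - w / a) by field_simp, cpow_def_of_ne_zero (mul_ne_zero ha₀ hv₀), hlog,
    cpow_def_of_ne_zero ha₀, cpow_def_of_ne_zero hv₀, ← exp_add, add_mul]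

theorem multichoose_mul_pow_mul_cpow {a : ℂ} (ha : a ≠ 0) (s w : ℂ) (k : ℕ) :
    multichoose s k * w ^ k * a ^ (-(s + k)) = a ^ (-s) * (multichoose s k * (w / a) ^ k) := by
  rw [neg_add', cpow_sub _ _ ha, cpow_natCast, div_pow]
  ring

theorem hasSum_sub_cpow {a w : ℂ} (ha : 0 ≤ a.re) (hw : ‖w‖ < ‖a‖) (s : ℂ) :
    HasSum (fun k : ℕ ↦ multichoose s k * w ^ k * a ^ (-(s + k))) ((a - w) ^ (-s)) := by
  have ha₀ : 0 < ‖a‖ := (norm_nonneg w).trans_lt hw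
  simp only [multichoose_mul_pow_mul_cpow (norm_pos_iff.1 ha₀)]
  rw [sub_cpow_eq_cpow_mul_one_sub_div_cpow ha hw]
  refine (hasSum_multichoose_mul_pow s ?_).mul_left _
  rwa [norm_div, div_lt_one ha₀]

section Family

variable {ι : Type*} {a : ι → ℂ} {s w : ℂ} {R : ℝ}

theorem summable_multichoose_mul_pow_mul_cpow (hR : ∀ i, R ≤ ‖a i‖) (hw : ‖w‖ < R)
    (hs : Summable fun i ↦ a i ^ (-s)) :
    Summable fun p : ι × ℕ ↦ multichoose s p.2 * w ^ p.2 * a p.1 ^ (-(s + p.2)) := by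
  have hR₀ : 0 < R := (norm_nonneg w).trans_lt hw
  have hbound := hs.norm.mul_of_nonneg
    (summable_norm_multichoose_mul_pow s (div_nonneg (norm_nonneg w) hR₀.le)
      ((div_lt_one hR₀).2 hw))
    (fun _ ↦ norm_nonneg _) (fun _ ↦ by positivity)
  refine .of_norm_bounded hbound fun ⟨i, k⟩ ↦ ?_
  have ha : a i ≠ 0 := norm_pos_iff.1 (hR₀.trans_le (hR i))
  rw [multichoose_mul_pow_mul_cpow ha, norm_mul, norm_mul, norm_pow, norm_div]
  gcongr
  exact hR i

theorem summable_sub_cpow (ha : ∀ i, 0 ≤ (a i).re) (hR : ∀ i, R ≤ ‖a i‖) (hw : ‖w‖ < R)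
    (hs : Summable fun i ↦ a i ^ (-s)) : Summable fun i ↦ (a i - w) ^ (-s) :=
  ((summable_multichoose_mul_pow_mul_cpow hR hw hs).hasSum.prod_fiberwise fun i ↦
    hasSum_sub_cpow (ha i) (hw.trans_le (hR i)) s).summable

theorem hasSum_multichoose_mul_pow_mul_tsum_cpow (ha : ∀ i, 0 ≤ (a i).re) (hR : ∀ i, R ≤ ‖a i‖)
    (hw : ‖w‖ < R) (hs : Summable fun i ↦ a i ^ (-s)) :
    HasSum (fun k : ℕ ↦ multichoose s k * w ^ k * ∑' i, a i ^ (-(s + k)))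
      (∑' i, (a i - w) ^ (-s)) := by
  have hF := summable_multichoose_mul_pow_mul_cpow hR hw hs
  have hrows := hF.hasSum.prod_fiberwise fun i ↦ hasSum_sub_cpow (ha i) (hw.trans_le (hR i)) s
  have hcols := hF.prod_symm.hasSum.prod_fiberwise fun k ↦ (hF.prod_symm.prod_factor k).hasSum
  rw [hrows.tsum_eq, ← (Equiv.prodComm ℕ ι).tsum_eq]
  simpa only [Equiv.coe_prodComm, Prod.fst_swap, Prod.snd_swap, tsum_mul_left] using hcols

end Family

theorem I_cpow_neg_add_neg_I_cpow_neg (s : ℂ) :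
    I ^ (-s) + (-I) ^ (-s) = 2 * cos (π * s / 2) := by
  rw [cpow_def_of_ne_zero I_ne_zero, cpow_def_of_ne_zero (neg_ne_zero.2 I_ne_zero), log_I,
    log_neg_I, two_cos, add_comm]
  ring_nf

theorem ofReal_mul_cpow {t : ℝ} (ht : 0 ≤ t) (c s : ℂ) :
    ((t : ℂ) * c) ^ s = (t : ℂ) ^ s * c ^ s := by
  rcases eq_or_ne s 0 with rfl | hs
  · simp
  rcases ht.eq_or_lt with rfl | ht
  · simp [zero_cpow hs]
  rcases eq_or_ne c 0 with rfl | hc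
  · simp [zero_cpow hs]
  have ht₀ : (t : ℂ) ≠ 0 := ofReal_ne_zero.2 ht.ne'
  rw [cpow_def_of_ne_zero (mul_ne_zero ht₀ hc), log_ofReal_mul ht hc, ofReal_log ht.le, add_mul,
    exp_add, ← cpow_def_of_ne_zero ht₀, ← cpow_def_of_ne_zero hc]

theorem hasSum_mul_nat_add_one_cpow_neg {s : ℂ} (hs : 1 < s.re) (c : ℂ) :
    HasSum (fun n : ℕ ↦ (c * (n + 1)) ^ (-s)) (c ^ (-s) * riemannZeta s) := by
  have hzeta : HasSum (fun n : ℕ ↦ 1 / ((n : ℂ) + 1) ^ s) (riemannZeta s) := by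
    rw [zeta_eq_tsum_one_div_nat_add_one_cpow hs]
    simpa using ((summable_nat_add_iff 1).2 (summable_one_div_nat_cpow.2 hs)).hasSum
  refine (hzeta.mul_left _).congr_fun fun n ↦ ?_
  have hn := ofReal_mul_cpow (t := n + 1) (by positivity) c (-s)
  push_cast at hn
  rw [mul_comm, hn, cpow_neg (_ + 1), one_div, mul_comm]

theorem hasSum_mul_int_cpow_neg {s : ℂ} (hs : 1 < s.re) (c : ℂ) :
    HasSum (fun n : ℤ ↦ (c * n) ^ (-s)) ((c ^ (-s) + (-c) ^ (-s)) * riemannZeta s) := by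
  have hs₀ : -s ≠ 0 := neg_ne_zero.2 (ne_zero_of_one_lt_re hs)
  have h := HasSum.of_add_one_of_neg_add_one (f := fun n : ℤ ↦ (c * n) ^ (-s))
    (by simpa using hasSum_mul_nat_add_one_cpow_neg hs c)
    (by simpa [mul_add, add_comm] using hasSum_mul_nat_add_one_cpow_neg hs (-c))
  simpa [zero_cpow hs₀, add_mul] using h

theorem ne_neg_natCast_of_re_pos {s : ℂ} (hs : 0 < s.re) (n : ℕ) : s ≠ -n := by
  rintro rfl
  exact hs.not_ge (by simp)

theorem hasSum_two_pi_I_mul_int_cpow_neg {s : ℂ} (hs : 1 < s.re) :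
    HasSum (fun n : ℤ ↦ (2 * π * I * n) ^ (-s)) (riemannZeta (1 - s) / Gamma s) := by
  have hs₀ : 0 < s.re := one_pos.trans hs
  have hcpow (c : ℂ) : (2 * π * c) ^ (-s) = (2 * π) ^ (-s) * c ^ (-s) := mod_cast
    ofReal_mul_cpow Real.two_pi_pos.le c (-s)
  convert hasSum_mul_int_cpow_neg hs (2 * π * I) using 1
  rw [riemannZeta_one_sub (ne_neg_natCast_of_re_pos hs₀) (by rintro rfl; simp at hs), ← mul_neg,
    hcpow, hcpow, ← mul_add, I_cpow_neg_add_neg_I_cpow_neg]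
  field_simp [Gamma_ne_zero_of_re_pos hs₀]

theorem hasSum_ne_zero_two_pi_I_mul_cpow_neg {s : ℂ} (hs : 1 < s.re) :
    HasSum (fun n : ({0}ᶜ : Set ℤ) ↦ (2 * π * I * n) ^ (-s)) (riemannZeta (1 - s) / Gamma s) := by
  have hs₀ : -s ≠ 0 := neg_ne_zero.2 (ne_zero_of_one_lt_re hs)
  refine (hasSum_subtype_iff_of_support_subset ?_).2 (hasSum_two_pi_I_mul_int_cpow_neg hs)
  rintro n hn rfl
  simp [zero_cpow hs₀] at hn

theorem two_pi_le_norm_two_pi_I_mul (n : ({0}ᶜ : Set ℤ)) : 2 * π ≤ ‖2 * π * I * n‖ := by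
  have hn : (1 : ℝ) ≤ |(n : ℤ)| := mod_cast Int.one_le_abs n.2
  simpa [abs_of_pos Real.pi_pos] using le_mul_of_one_le_right Real.two_pi_pos.le hn

theorem summable_ne_zero_two_pi_I_mul_sub_cpow_neg {s w : ℂ} (hs : 1 < s.re) (hw : ‖w‖ < 2 * π) :
    Summable fun n : ({0}ᶜ : Set ℤ) ↦ (2 * π * I * n - w) ^ (-s) :=
  summable_sub_cpow (by simp) two_pi_le_norm_two_pi_I_mul hw
    (hasSum_ne_zero_two_pi_I_mul_cpow_neg hs).summable

theorem G_zeta_expansion_general {s w : ℂ} (hs : 1 < s.re) (hw : ‖w‖ < 2 * π) :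
    HasSum (fun k : ℕ ↦ riemannZeta (1 - s - k) * w ^ k / k !)
      (Gamma s * ∑' n : ({0}ᶜ : Set ℤ), (2 * π * I * n - w) ^ (-s)) := by
  have h := hasSum_multichoose_mul_pow_mul_tsum_cpow (by simp) two_pi_le_norm_two_pi_I_mul hw
    (hasSum_ne_zero_two_pi_I_mul_cpow_neg hs).summable
  refine (h.mul_left (Gamma s)).congr_fun fun k ↦ ?_
  have hsk : 1 < (s + k).re := by
    simpa using hs.trans_le (le_add_of_nonneg_right k.cast_nonneg)
  have hΓ : Gamma (s + k) ≠ 0 := Gamma_ne_zero_of_re_pos (one_pos.trans hsk)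
  calc riemannZeta (1 - s - k) * w ^ k / (k !)
    _ = Gamma (s + k) / k ! * w ^ k * (riemannZeta (1 - (s + k)) / Gamma (s + k)) := by
      rw [sub_sub]
      field_simp
    _ = Gamma s * multichoose s k * w ^ k *
        ∑' n : ({0}ᶜ : Set ℤ), (2 * π * I * n) ^ (-(s + k)) := by
      rw [(hasSum_ne_zero_two_pi_I_mul_cpow_neg hsk).tsum_eq,
        Gamma_mul_multichoose (ne_neg_natCast_of_re_pos (one_pos.trans hs))]
    _ = _ := by ring

theorem G_sub_eq_Gamma_mul_tsum {z : ℂ} (hlog : ‖log z‖ < 2 * π) :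
    G z - √π / 2 * (-log z) ^ (-(3 : ℂ) / 2) =
      Gamma (3 / 2) * ∑' n : ({0}ᶜ : Set ℤ), (2 * π * I * n - log z) ^ (-(3 / 2 : ℂ)) := by
  let f (n : ℤ) : ℂ := (2 * π * I * n - log z) ^ (-(3 / 2 : ℂ))
  have hf : Summable (f ∘ (↑) : ({0}ᶜ : Set ℤ) → ℂ) :=
    summable_ne_zero_two_pi_I_mul_sub_cpow_neg (by norm_num) hlog
  have hsum : HasSum f (f 0 + ∑' n : ({0}ᶜ : Set ℤ), f n) :=
    HasSum.add_compl (hasSum_singleton 0 f) hf.hasSum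
  have hf₀ : f 0 = (-log z) ^ (-(3 / 2 : ℂ)) := by simp [f]
  rw [G, Gamma_three_halves, neg_div, hsum.tsum_eq, hf₀]
  ring

/-- For `0 < |z| < 1` with `|Log z| < 2π`, the series
`Σ_{n≥0} ζ(−n−1/2) (Log z)ⁿ/n!` converges and
`G(z) = (√π/2)(−Log z)^{−3/2} + Σ_{n≥0} ζ(−n−1/2) (Log z)ⁿ/n!`. -/
theorem G_zeta_expansion (z : ℂ) (h0 : 0 < ‖z‖) (h1 : ‖z‖ < 1)
    (hlog : ‖Complex.log z‖ < 2 * Real.pi) :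
    HasSum (fun n : ℕ =>
        riemannZeta (-(n : ℂ) - 1 / 2) * (Complex.log z) ^ n / (n.factorial : ℂ))
      (G z - (Real.sqrt Real.pi / 2) * (-Complex.log z) ^ (-(3 : ℂ) / 2)) := by
  rw [G_sub_eq_Gamma_mul_tsum hlog]
  convert G_zeta_expansion_general (s := 3 / 2) (by norm_num) hlog using 5
  ring
end

section
/- For every real number u ≥ 0, G(−e^u) equals the real part of ((i − 1)/(4π)) · Σ_{n≥0} (n + 1/2 + u/(2πi))^{−3/2}, where the series converges absolutely. -/
open Complex ComplexConjugate Asymptotics Filter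
open Real (pi_pos pi_ne_zero)

/-- The Hurwitz zeta series `ζ(s, a) = ∑_{n ≥ 0} (n + a)^{-s}` with a complex shift `a`;
Mathlib's `HurwitzZeta.hurwitzZeta` only takes `a ∈ ℝ/ℤ`. It has the junk value `0` where the
series is not absolutely convergent. -/
noncomputable def hurwitzSeries (s a : ℂ) : ℂ :=
  ∑' n : ℕ, (n + a) ^ (-s)

lemma isTheta_norm_natCast_add (a : ℂ) :
    (fun n : ℕ => ‖n + a‖) =Θ[atTop] (fun n : ℕ => (n : ℝ)) := by
  have hconst : (fun _ : ℕ => a) =o[atTop] (fun n : ℕ => (n : ℂ)) :=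
    isLittleO_const_left.2 <| .inr <| by
      simpa [Function.comp_def] using tendsto_natCast_atTop_atTop (R := ℝ)
  have hequiv : (fun n : ℕ => n + a) ~[atTop] (fun n : ℕ => (n : ℂ)) :=
    IsEquivalent.refl.add_isLittleO hconst
  simpa using hequiv.isTheta.norm_left.norm_right

lemma summable_norm_natCast_add_cpow (a : ℂ) {s : ℂ} (hs : s.re < -1) :
    Summable (fun n : ℕ => ‖((n : ℂ) + a) ^ s‖) := by
  have hbound : (fun n : ℕ => ((n : ℂ) + a) ^ s) =O[atTop] (fun n : ℕ => (n : ℝ) ^ s.re) :=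
    (isBigO_cpow_rpow isBoundedUnder_const).trans_isTheta <|
      (isTheta_norm_natCast_add a).rpow (.of_forall fun _ => norm_nonneg _)
        (.of_forall fun n => n.cast_nonneg)
  exact summable_of_isBigO_nat (Real.summable_nat_rpow.2 hs) hbound.norm_left

lemma hasSum_hurwitzSeries (a : ℂ) {s : ℂ} (hs : 1 < s.re) :
    HasSum (fun n : ℕ => ((n : ℂ) + a) ^ (-s)) (hurwitzSeries s a) :=
  (summable_norm_natCast_add_cpow a (by simpa using hs)).of_norm.hasSum

lemma hurwitzSeries_conj (s : ℂ) {a : ℂ} (ha : 0 ≤ a.re) :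
    hurwitzSeries (conj s) (conj a) = conj (hurwitzSeries s a) := by
  rw [hurwitzSeries, hurwitzSeries, conj_tsum]
  refine tsum_congr fun n => ?_
  have hre : 0 ≤ ((n : ℂ) + a).re := by
    rw [add_re, natCast_re]
    positivity
  simpa using conj_cpow (n + a) (conj (-s)) (arg_lt_pi_iff.2 (.inl hre)).ne

lemma mul_cpow_of_re_nonneg_of_re_pos {c z : ℂ} (hc : 0 ≤ c.re) (hz : 0 < z.re) (s : ℂ) :
    (c * z) ^ s = c ^ s * z ^ s := by
  have hz0 : z ≠ 0 := fun h => by simp [h] at hz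
  rcases eq_or_ne c 0 with rfl | hc0
  · rcases eq_or_ne s 0 with rfl | hs <;> simp [*]
  have hargc := abs_le.1 (abs_arg_le_pi_div_two_iff.2 hc)
  have hargz := abs_lt.1 (abs_arg_lt_pi_div_two_iff.2 (.inl hz))
  rw [cpow_def_of_ne_zero (mul_ne_zero hc0 hz0), cpow_def_of_ne_zero hc0, cpow_def_of_ne_zero hz0,
    log_mul hc0 hz0 ⟨by linarith, by linarith⟩, add_mul, exp_add]

lemma sq_cpow_div_two {w : ℂ} (hw : 0 < w.re) (s : ℂ) : (w ^ 2) ^ (s / 2) = w ^ s := by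
  have harg := abs_lt.1 (abs_arg_lt_pi_div_two_iff.2 (.inl hw))
  rw [← cpow_ofNat_mul' (by linarith) (by linarith), mul_div_cancel₀ s two_ne_zero]

theorem hasSum_int_mul_sub_cpow {c a s : ℂ} (hc : c.re = 0) (ha₀ : 0 < a.re) (ha₁ : a.re < 1)
    (hs : 1 < s.re) :
    HasSum (fun n : ℤ => (c * (n - a)) ^ (-s))
      ((-c) ^ (-s) * hurwitzSeries s a + c ^ (-s) * hurwitzSeries s (1 - a)) := by
  have hnonpos : HasSum (fun n : ℕ => (c * (((-n : ℤ) : ℂ) - a)) ^ (-s))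
      ((-c) ^ (-s) * hurwitzSeries s a) := by
    refine ((hasSum_hurwitzSeries a hs).mul_left _).congr_fun fun n => ?_
    have hre : 0 < ((n : ℂ) + a).re := by
      rw [add_re, natCast_re]
      positivity
    rw [← mul_cpow_of_re_nonneg_of_re_pos (by simp [hc]) hre]
    push_cast
    ring_nf
  have hpos : HasSum (fun n : ℕ => (c * (((n + 1 : ℤ) : ℂ) - a)) ^ (-s))
      (c ^ (-s) * hurwitzSeries s (1 - a)) := by
    refine ((hasSum_hurwitzSeries (1 - a) hs).mul_left _).congr_fun fun n => ?_
    have hre : 0 < ((n : ℂ) + (1 - a)).re := by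
      simp only [add_re, natCast_re, sub_re, one_re]
      linarith [n.cast_nonneg (α := ℝ)]
    rw [← mul_cpow_of_re_nonneg_of_re_pos hc.ge hre]
    push_cast
    ring_nf
  rw [← (Equiv.neg ℤ).hasSum_iff]
  exact .of_nat_of_neg_add_one hnonpos (by simpa using hpos)

lemma div_two_pi_I_re (w : ℂ) : (w / (2 * Real.pi * I)).re = w.im / (2 * Real.pi) := by
  rw [← div_div, div_I, ← ofReal_ofNat, ← ofReal_mul]
  simp [-ofReal_mul, -ofReal_ofNat]

theorem G_eq_hurwitzSeries_add {z : ℂ} (hz : 0 < z.arg) :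
    G z = Real.sqrt Real.pi / 2 *
      ((-(2 * Real.pi * I)) ^ (-(3 / 2) : ℂ) * hurwitzSeries (3 / 2) (log z / (2 * Real.pi * I)) +
        (2 * Real.pi * I) ^ (-(3 / 2) : ℂ) *
          hurwitzSeries (3 / 2) (1 - log z / (2 * Real.pi * I))) := by
  have hre : (log z / (2 * Real.pi * I)).re = z.arg / (2 * Real.pi) := by
    rw [div_two_pi_I_re, log_im]
  have hpos : 0 < (log z / (2 * Real.pi * I)).re := hre ▸ by positivity
  have hlt : (log z / (2 * Real.pi * I)).re < 1 := by
    rw [hre, div_lt_one Real.two_pi_pos]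
    linarith [arg_le_pi z, pi_pos]
  have hsum := hasSum_int_mul_sub_cpow (c := 2 * Real.pi * I) (s := 3 / 2) (by simp) hpos hlt
    (by norm_num)
  simp only [mul_sub, mul_div_cancel₀ (log z) two_pi_I_ne_zero] at hsum
  rw [G, neg_div, hsum.tsum_eq]

lemma log_neg_exp_ofReal (u : ℝ) : log (-(Real.exp u : ℂ)) = u + Real.pi * I := by
  rw [← mul_neg_one, log_ofReal_mul (Real.exp_pos u) (by norm_num), Real.log_exp, log_neg_one]

lemma sqrt_pi_mul_neg_two_pi_I_cpow :
    (Real.sqrt Real.pi : ℂ) * (-(2 * Real.pi * I)) ^ (-(3 / 2) : ℂ) = (I - 1) / (4 * Real.pi) := by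
  have hsqrt : (Real.sqrt Real.pi : ℂ) ^ 2 = Real.pi := mod_cast Real.sq_sqrt pi_pos.le
  have hsq : -(2 * Real.pi * I) = (Real.sqrt Real.pi * (1 - I)) ^ 2 := by
    linear_combination (-(1 - I) ^ 2) * hsqrt - Real.pi * I_sq
  have hre : 0 < (Real.sqrt Real.pi * (1 - I)).re := by simp [pi_pos]
  have hne : Real.sqrt Real.pi * (1 - I) ≠ 0 := fun h => by simp [h] at hre
  have hfourth : (1 - I) ^ 4 = -4 := by linear_combination (I ^ 2 + 5 - 4 * I) * I_sq
  rw [hsq, ← neg_div, sq_cpow_div_two hre, cpow_neg, cpow_ofNat, ← div_eq_mul_inv,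
    div_eq_div_iff (pow_ne_zero 3 hne) (by simp [pi_ne_zero])]
  linear_combination (Real.sqrt Real.pi : ℂ) ^ 3 * hfourth - 4 * Real.sqrt Real.pi * hsqrt

lemma two_pi_I_cpow_conj (s : ℂ) :
    (2 * Real.pi * I) ^ conj s = conj ((-(2 * Real.pi * I)) ^ s) := by
  have harg : (-(2 * Real.pi * I)).arg < Real.pi := arg_lt_pi_iff.2 (.inl (by simp))
  simpa [conj_ofNat] using conj_cpow _ (conj s) harg.ne

lemma conj_half_add_div_two_pi_I (u : ℝ) :
    conj (1 / 2 + u / (2 * Real.pi * I) : ℂ) = 1 - (1 / 2 + u / (2 * Real.pi * I)) := by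
  simp only [map_add, map_div₀, map_mul, map_one, conj_ofReal, conj_I, conj_ofNat]
  ring

lemma log_neg_exp_div_two_pi_I (u : ℝ) :
    log (-(Real.exp u : ℂ)) / (2 * Real.pi * I) = 1 / 2 + u / (2 * Real.pi * I) := by
  rw [log_neg_exp_ofReal]
  field_simp
  ring

theorem G_neg_exp_eq_re_hurwitzSeries (u : ℝ) :
    G (-(Real.exp u : ℂ)) =
      (((I - 1) / (4 * Real.pi) *
        hurwitzSeries (3 / 2) (1 / 2 + u / (2 * Real.pi * I))).re : ℂ) := by
  set a : ℂ := 1 / 2 + u / (2 * Real.pi * I) with ha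
  have harg : (-(Real.exp u : ℂ)).arg = Real.pi := by
    rw [← ofReal_neg, arg_ofReal_of_neg (neg_lt_zero.2 (Real.exp_pos u))]
  have hre : 0 ≤ a.re := by
    rw [ha, add_re, div_two_pi_I_re]
    norm_num
  have hseries : hurwitzSeries (3 / 2) (1 - a) = conj (hurwitzSeries (3 / 2) a) := by
    rw [← hurwitzSeries_conj _ hre, ha, conj_half_add_div_two_pi_I]
    simp [conj_ofNat]
  have hcpow : (2 * Real.pi * I) ^ (-(3 / 2) : ℂ) =
      conj ((-(2 * Real.pi * I)) ^ (-(3 / 2) : ℂ)) := by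
    simpa [conj_ofNat] using two_pi_I_cpow_conj (-(3 / 2))
  set w : ℂ := (-(2 * Real.pi * I)) ^ (-(3 / 2) : ℂ) * hurwitzSeries (3 / 2) a with hw
  calc G (-(Real.exp u : ℂ))
    _ = Real.sqrt Real.pi / 2 * (w + conj w) := by
      rw [G_eq_hurwitzSeries_add (harg ▸ pi_pos), log_neg_exp_div_two_pi_I, ← ha, hcpow, hseries,
        ← map_mul]
    _ = ((Real.sqrt Real.pi * w).re : ℂ) := by
      rw [add_conj, re_ofReal_mul]
      push_cast
      ring
    _ = (((I - 1) / (4 * Real.pi) * hurwitzSeries (3 / 2) a).re : ℂ) := by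
      rw [hw, ← mul_assoc, sqrt_pi_mul_neg_two_pi_I_cpow]

theorem G_neg_exp_hurwitz_general (u : ℝ) :
    Summable (fun n : ℕ =>
      ‖((n : ℂ) + 1 / 2 + (u : ℂ) / (2 * (Real.pi : ℂ) * Complex.I)) ^ (-(3 : ℂ) / 2)‖) ∧
    G (-(Real.exp u : ℂ)) =
      (Complex.re (((Complex.I - 1) / (4 * (Real.pi : ℂ))) *
        ∑' n : ℕ, ((n : ℂ) + 1 / 2 +
          (u : ℂ) / (2 * (Real.pi : ℂ) * Complex.I)) ^ (-(3 : ℂ) / 2)) : ℂ) := by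
  simp only [add_assoc, neg_div]
  exact ⟨summable_norm_natCast_add_cpow _ (by norm_num), G_neg_exp_eq_re_hurwitzSeries u⟩

/-- For real `u ≥ 0`, the series `Σ_{n≥0} (n + 1/2 + u/(2πi))^{−3/2}` converges
absolutely and `G(−e^u)` equals the real part of
`((i−1)/(4π)) Σ_{n≥0} (n + 1/2 + u/(2πi))^{−3/2}`. -/
theorem G_neg_exp_hurwitz (u : ℝ) (hu : 0 ≤ u) :
    Summable (fun n : ℕ =>
      ‖((n : ℂ) + 1 / 2 + (u : ℂ) / (2 * (Real.pi : ℂ) * Complex.I)) ^ (-(3 : ℂ) / 2)‖) ∧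
    G (-(Real.exp u : ℂ)) =
      (Complex.re (((Complex.I - 1) / (4 * (Real.pi : ℂ))) *
        ∑' n : ℕ, ((n : ℂ) + 1 / 2 +
          (u : ℂ) / (2 * (Real.pi : ℂ) * Complex.I)) ^ (-(3 : ℂ) / 2)) : ℂ) :=
  G_neg_exp_hurwitz_general u
end
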